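/- arXiv:1712.05850 — 2 statements merged into one kernel-verified Lean document; each statement's English description precedes it below -/
import Mathlib

section
/- The characteristic polynomial of A equals X^(2^K − K) · (X − 2^K)^(K/2) · (X + 2^K)^(K/2); equivalently, A has exactly the eigenvalues +2^K with multiplicity K/2, −2^K with multiplicity K/2, and 0 with multiplicity 2^K − K. -/
/-- The value ±1 associated to a Boolean sign. -/
noncomputable def sgn (b : Bool) : ℝ := if b then 1 else -1

/-- The `2^K × 2^K` matrix with rows and columns indexed by sign vectors
`u, v ∈ {−1,1}^K` (encoded as `Fin K → Bool`), with entries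
`A_{u,v} = Σ_{m=1}^K (−1)^m u_m v_m`. -/
noncomputable def volcanoA (K : ℕ) : Matrix (Fin K → Bool) (Fin K → Bool) ℝ :=
  Matrix.of fun u v => ∑ m : Fin K, (-1 : ℝ) ^ ((m : ℕ) + 1) * sgn (u m) * sgn (v m)


/-!
Let `P` be the `2^K × K` matrix whose rows are all the sign vectors. Then `A = P D Pᵀ`, where `D` is
diagonal with entries alternately `-1` and `1`. The columns of `P` are orthogonal, that is
`Pᵀ P = 2^K • 1`, so moving `P` around the product turns `A` into the `K × K` diagonal matrix
`2^K • D`, and this changes the characteristic polynomial only by the factor `X ^ (2^K - K)`.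
-/

open Matrix Polynomial

theorem sgn_mul_self (b : Bool) : sgn b * sgn b = 1 := by
  cases b <;> simp [sgn]

theorem sgn_not (b : Bool) : sgn (!b) = -sgn b := by
  cases b <;> simp [sgn]

theorem prod_range_apply_neg_one_pow {R M : Type*} [Monoid R] [HasDistribNeg R] [CommMonoid M]
    (f : R → M) (n : ℕ) :
    ∏ i ∈ Finset.range n, f ((-1) ^ i) = f 1 ^ ((n + 1) / 2) * f (-1) ^ (n / 2) := by
  induction n with
  | zero => simp
  | succ n ih =>
    rw [Finset.prod_range_succ, ih]
    obtain hn | hn := n.even_or_odd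
    · have half_add_one : (n + 1) / 2 = n / 2 := by grind
      have half_add_two : (n + 1 + 1) / 2 = n / 2 + 1 := by grind
      rw [hn.neg_one_pow, half_add_one, half_add_two, pow_succ, mul_right_comm]
    · have half_add_two : (n + 1 + 1) / 2 = (n + 1) / 2 := by grind
      have half_add_one : (n + 1) / 2 = n / 2 + 1 := by grind
      rw [hn.neg_one_pow, half_add_two, half_add_one, pow_succ (f (-1)), mul_assoc]

theorem prod_X_sub_C_mul_neg_one_pow_succ {R : Type*} [CommRing R] (c : R) (n : ℕ) :
    ∏ i : Fin n, (X - C (c * (-1) ^ ((i : ℕ) + 1))) =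
      (X - C c) ^ (n / 2) * (X + C c) ^ ((n + 1) / 2) := by
  let factor (s : R) : R[X] := X + C (c * s)
  calc ∏ i : Fin n, (X - C (c * (-1) ^ ((i : ℕ) + 1)))
      = ∏ i : Fin n, factor ((-1) ^ (i : ℕ)) := by
        refine Finset.prod_congr rfl fun i _ ↦ ?_
        rw [pow_succ, mul_neg_one, mul_neg, C_neg, sub_neg_eq_add]
    _ = factor 1 ^ ((n + 1) / 2) * factor (-1) ^ (n / 2) := by
        rw [Fin.prod_univ_eq_prod_range (fun i ↦ factor ((-1) ^ i)), prod_range_apply_neg_one_pow]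
    _ = (X - C c) ^ (n / 2) * (X + C c) ^ ((n + 1) / 2) := by
        simp only [factor, mul_one, mul_neg, C_neg, ← sub_eq_add_neg, mul_comm]

theorem charpoly_mul_diagonal_mul_of_mul_eq_smul_one {R m n : Type*} [CommRing R]
    [Fintype m] [DecidableEq m] [Fintype n] [DecidableEq n]
    {P : Matrix m n R} {Q : Matrix n m R} {c : R} (hQP : Q * P = c • 1)
    (hcard : Fintype.card n ≤ Fintype.card m) (w : n → R) :
    (P * diagonal w * Q).charpoly =
      X ^ (Fintype.card m - Fintype.card n) * ∏ i, (X - C (c * w i)) := by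
  have hdiag : Q * (P * diagonal w) = diagonal (c • w) := by
    rw [← Matrix.mul_assoc, hQP, smul_mul, Matrix.one_mul, diagonal_smul]
  rw [charpoly_mul_comm_of_le _ _ hcard, hdiag, charpoly_diagonal]
  simp only [Pi.smul_apply, smul_eq_mul]

section SignMatrix

variable {ι : Type*} [Fintype ι] [DecidableEq ι]

theorem sum_sgn_mul_sgn_of_ne {i j : ι} (hij : i ≠ j) :
    ∑ v : ι → Bool, sgn (v i) * sgn (v j) = 0 := by
  -- Flipping the `i`-th sign pairs off terms of opposite sign.
  refine Finset.sum_involution (fun v _ ↦ Function.update v i (!v i)) ?_ ?_ ?_ ?_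
  · intro v _
    simp [sgn_not, Function.update_of_ne hij.symm]
  · intro v _ _ hfix
    simpa using congrFun hfix i
  · exact fun _ _ ↦ Finset.mem_univ _
  · intro v _
    simp

variable (ι) in
/-- The matrix whose rows are all the sign vectors indexed by `ι`, used to factor `volcanoA` through
a diagonal matrix. As in `volcanoA`, a sign vector is encoded as a function `ι → Bool`. -/
noncomputable def signMatrix : Matrix (ι → Bool) ι ℝ :=
  Matrix.of fun u i ↦ sgn (u i)

theorem signMatrix_transpose_mul_self :
    (signMatrix ι)ᵀ * signMatrix ι = (2 : ℝ) ^ Fintype.card ι • 1 := by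
  ext i j
  rw [Matrix.mul_apply, Matrix.smul_apply, Matrix.one_apply]
  simp only [signMatrix, transpose_apply, of_apply]
  split_ifs with hij
  · simp [hij, sgn_mul_self]
  · rw [sum_sgn_mul_sgn_of_ne hij, smul_zero]

theorem charpoly_signMatrix_mul_diagonal_mul_transpose (w : ι → ℝ) :
    (signMatrix ι * diagonal w * (signMatrix ι)ᵀ).charpoly =
      X ^ (2 ^ Fintype.card ι - Fintype.card ι) *
        ∏ i, (X - C (2 ^ Fintype.card ι * w i)) := by
  have hcard : Fintype.card (ι → Bool) = 2 ^ Fintype.card ι := by simp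
  have hle : Fintype.card ι ≤ Fintype.card (ι → Bool) := hcard ▸ Nat.lt_two_pow_self.le
  rw [charpoly_mul_diagonal_mul_of_mul_eq_smul_one signMatrix_transpose_mul_self hle, hcard]

end SignMatrix

theorem volcanoA_eq_signMatrix_mul_diagonal_mul_transpose (K : ℕ) :
    volcanoA K = signMatrix (Fin K) * diagonal (fun m : Fin K ↦ (-1 : ℝ) ^ ((m : ℕ) + 1)) *
      (signMatrix (Fin K))ᵀ := by
  ext u v
  rw [Matrix.mul_apply]
  simp only [volcanoA, signMatrix, mul_diagonal, transpose_apply, of_apply]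
  exact Finset.sum_congr rfl fun m _ ↦ by ring

theorem stmt4_general (K : ℕ) :
    (volcanoA K).charpoly =
      X ^ (2 ^ K - K) * (X - C ((2 : ℝ) ^ K)) ^ (K / 2) *
        (X + C ((2 : ℝ) ^ K)) ^ ((K + 1) / 2) := by
  rw [volcanoA_eq_signMatrix_mul_diagonal_mul_transpose,
    charpoly_signMatrix_mul_diagonal_mul_transpose, Fintype.card_fin,
    prod_X_sub_C_mul_neg_one_pow_succ, mul_assoc]

open Polynomial in
/-- The characteristic polynomial of `A` is
`X^(2^K − K) · (X − 2^K)^(K/2) · (X + 2^K)^(K/2)`: the eigenvalues are `+2^K`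
with multiplicity `K/2`, `−2^K` with multiplicity `K/2`, and `0` with
multiplicity `2^K − K`. -/
theorem stmt4 (K : ℕ) (hK : 0 < K) (hKeven : Even K) :
    (volcanoA K).charpoly =
      X ^ (2 ^ K - K) * (X - C ((2 : ℝ) ^ K)) ^ (K / 2) * (X + C ((2 : ℝ) ^ K)) ^ (K / 2) := by
  have half_add_one : (K + 1) / 2 = K / 2 := by grind
  rw [stmt4_general, half_add_one]
end

section
/- The function F : [0, ∞) → ℝ defined by F(γ) = (π/2) · (1 + γ) / [ e^{−γ/2} + √(πγ/2) · Erf(√(γ/2)) ]² is strictly decreasing; consequently, for every γ ≥ 0 one has F(γ) > F(1) = π / [ e^{−1/2} + √(π/2) · Erf(1/√2) ]² if and only if γ < 1. -/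
/-- The error function `Erf(x) = (2/√π) ∫₀^x e^{−t²} dt`. -/
noncomputable def erf (x : ℝ) : ℝ :=
  (2 / Real.sqrt Real.pi) * ∫ t in (0 : ℝ)..x, Real.exp (-t ^ 2)

/-- The moment product `M₊₁ M₋₁` as a function of the shape parameter
`γ = μ²/σ²`:
`F(γ) = (π/2)(1+γ)/[e^{−γ/2} + √(πγ/2) Erf(√(γ/2))]²`. -/
noncomputable def momentProduct (γ : ℝ) : ℝ :=
  (Real.pi / 2) * (1 + γ) /
    (Real.exp (-γ / 2) + Real.sqrt (Real.pi * γ / 2) * erf (Real.sqrt (γ / 2))) ^ 2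

/-!
`F(γ)` is the ratio `E[X²] / (E|X|)²` for a normal variable `X` of mean `μ` and variance `σ²`.
In the variable `x = √(γ/2)` the denominator is, up to a constant, the square of
`m(x) = e^{−x²} + √π x Erf(x)`, and the terms of `m'` containing `e^{−x²}` cancel, leaving
`m' = √π Erf`. The derivative of `(1 + 2x²) / m(x)²` is therefore a positive multiple of
`2x e^{−x²} − √π Erf(x)`, which is negative for `x > 0` because `e^{−t²}` is strictly decreasing
on `[0, x]`, so that its integral exceeds `x` times its last value.
-/

section

open Real Set

theorem sub_mul_lt_integral_of_strictAntiOn {f : ℝ → ℝ} {a b : ℝ} (hab : a < b)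
    (hf : StrictAntiOn f (Icc a b)) : (b - a) * f b < ∫ t in a..b, f t := by
  have hint : IntervalIntegrable f MeasureTheory.volume a b :=
    AntitoneOn.intervalIntegrable (by rw [uIcc_of_le hab.le]; exact hf.antitoneOn)
  have hpos : 0 < ∫ t in a..b, (f t - f b) :=
    intervalIntegral.intervalIntegral_pos_of_pos_on (hint.sub intervalIntegrable_const)
      (fun t ht => sub_pos.2 (hf (Ioo_subset_Icc_self ht) (right_mem_Icc.2 hab.le) ht.2)) hab
  rwa [intervalIntegral.integral_sub hint intervalIntegrable_const,
    intervalIntegral.integral_const, smul_eq_mul, sub_pos] at hpos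

theorem strictAntiOn_exp_neg_sq : StrictAntiOn (fun t : ℝ => exp (-t ^ 2)) (Ici 0) :=
  fun _ hs _ _ hst => exp_lt_exp.2 (neg_lt_neg (pow_lt_pow_left₀ hst hs two_ne_zero))

theorem hasDerivAt_exp_neg_sq (x : ℝ) :
    HasDerivAt (fun t : ℝ => exp (-t ^ 2)) (-(2 * x * exp (-x ^ 2))) x := by
  refine (hasDerivAt_pow 2 x).fun_neg.exp.congr_deriv ?_
  push_cast
  ring

theorem erf_zero : erf 0 = 0 := by
  rw [erf, intervalIntegral.integral_same, mul_zero]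

theorem hasDerivAt_erf (x : ℝ) : HasDerivAt erf (2 / √π * exp (-x ^ 2)) x :=
  have hcont : Continuous fun t : ℝ => exp (-t ^ 2) := by fun_prop
  (hcont.integral_hasStrictDerivAt 0 x).hasDerivAt.const_mul _

theorem strictMono_erf : StrictMono erf :=
  strictMono_of_hasDerivAt_pos hasDerivAt_erf fun _ => by positivity

theorem mul_erf_self_nonneg (x : ℝ) : 0 ≤ x * erf x := by
  rcases le_total 0 x with hx | hx
  · exact mul_nonneg hx (erf_zero ▸ strictMono_erf.monotone hx)
  · exact mul_nonneg_of_nonpos_of_nonpos hx (erf_zero ▸ strictMono_erf.monotone hx)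

theorem two_mul_mul_exp_neg_sq_lt_sqrt_pi_mul_erf {x : ℝ} (hx : 0 < x) :
    2 * x * exp (-x ^ 2) < √π * erf x := by
  have hlt : (x - 0) * exp (-x ^ 2) < ∫ t in (0 : ℝ)..x, exp (-t ^ 2) :=
    sub_mul_lt_integral_of_strictAntiOn hx (strictAntiOn_exp_neg_sq.mono Icc_subset_Ici_self)
  calc 2 * x * exp (-x ^ 2) < 2 * ∫ t in (0 : ℝ)..x, exp (-t ^ 2) := by linarith
    _ = √π * erf x := by
      rw [erf]
      field_simp

/-- The mean `E|X|` of the folded normal distribution, in units of `σ √(2/π)`, as a function of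
`x = μ / (σ √2)`, where `μ` and `σ²` are the mean and the variance of `X`. Its square is the
denominator of `momentProduct`. -/
noncomputable def foldedNormalMean (x : ℝ) : ℝ :=
  exp (-x ^ 2) + √π * (x * erf x)

theorem foldedNormalMean_pos (x : ℝ) : 0 < foldedNormalMean x :=
  add_pos_of_pos_of_nonneg (exp_pos _) (mul_nonneg (sqrt_nonneg _) (mul_erf_self_nonneg x))

theorem hasDerivAt_foldedNormalMean (x : ℝ) :
    HasDerivAt foldedNormalMean (√π * erf x) x := by
  refine ((hasDerivAt_exp_neg_sq x).add
    (((hasDerivAt_id' x).mul (hasDerivAt_erf x)).const_mul √π)).congr_deriv ?_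
  field_simp
  ring

theorem hasDerivAt_one_add_two_mul_sq_div_foldedNormalMean_sq (x : ℝ) :
    HasDerivAt (fun y => (1 + 2 * y ^ 2) / foldedNormalMean y ^ 2)
      (2 * (2 * x * exp (-x ^ 2) - √π * erf x) / foldedNormalMean x ^ 3) x := by
  have hm : foldedNormalMean x ≠ 0 := (foldedNormalMean_pos x).ne'
  have hnumerator : 2 * x * foldedNormalMean x - (1 + 2 * x ^ 2) * (√π * erf x) =
      2 * x * exp (-x ^ 2) - √π * erf x := by
    rw [foldedNormalMean]
    ring
  refine ((((hasDerivAt_pow 2 x).const_mul 2).const_add 1).div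
    ((hasDerivAt_foldedNormalMean x).fun_pow 2) (pow_ne_zero 2 hm)).congr_deriv ?_
  rw [← hnumerator]
  push_cast
  field_simp

theorem strictAntiOn_one_add_two_mul_sq_div_foldedNormalMean_sq :
    StrictAntiOn (fun x => (1 + 2 * x ^ 2) / foldedNormalMean x ^ 2) (Ici 0) := by
  have hderiv := hasDerivAt_one_add_two_mul_sq_div_foldedNormalMean_sq
  refine strictAntiOn_of_hasDerivWithinAt_neg (convex_Ici 0)
    (fun x _ => (hderiv x).continuousAt.continuousWithinAt)
    (fun x _ => (hderiv x).hasDerivWithinAt) fun x hx => ?_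
  rw [interior_Ici] at hx
  exact div_neg_of_neg_of_pos
    (mul_neg_of_pos_of_neg two_pos (sub_neg.2 (two_mul_mul_exp_neg_sq_lt_sqrt_pi_mul_erf hx)))
    (pow_pos (foldedNormalMean_pos x) 3)

theorem momentProduct_two_mul_sq {x : ℝ} (hx : 0 ≤ x) :
    momentProduct (2 * x ^ 2) = π / 2 * ((1 + 2 * x ^ 2) / foldedNormalMean x ^ 2) := by
  have hexp : -(2 * x ^ 2) / 2 = -x ^ 2 := by ring
  have hsqrt : √(2 * x ^ 2 / 2) = x := by
    rw [mul_div_cancel_left₀ _ two_ne_zero, sqrt_sq hx]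
  have hsqrt_pi : √(π * (2 * x ^ 2) / 2) = √π * x := by
    rw [mul_div_assoc, sqrt_mul pi_pos.le, hsqrt]
  rw [momentProduct, foldedNormalMean, hexp, hsqrt, hsqrt_pi, mul_assoc √π, mul_div_assoc]

theorem strictAntiOn_momentProduct : StrictAntiOn momentProduct (Ici 0) := by
  have hsubst : ∀ γ ∈ Ici (0 : ℝ), 2 * √(γ / 2) ^ 2 = γ := fun γ hγ => by
    rw [sq_sqrt (div_nonneg hγ zero_le_two), mul_div_cancel₀ _ two_ne_zero]
  intro a ha b hb hab
  rw [← hsubst a ha, ← hsubst b hb, momentProduct_two_mul_sq (sqrt_nonneg _),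
    momentProduct_two_mul_sq (sqrt_nonneg _)]
  have hlt : √(a / 2) < √(b / 2) :=
    sqrt_lt_sqrt (div_nonneg ha zero_le_two) (div_lt_div_of_pos_right hab two_pos)
  exact mul_lt_mul_of_pos_left (strictAntiOn_one_add_two_mul_sq_div_foldedNormalMean_sq
    (sqrt_nonneg _) (sqrt_nonneg _) hlt) (half_pos pi_pos)

theorem momentProduct_one :
    momentProduct 1 = π / (exp (-(1 : ℝ) / 2) + √(π / 2) * erf (1 / √2)) ^ 2 := by
  rw [momentProduct, mul_one, sqrt_div zero_le_one 2, sqrt_one, one_add_one_eq_two,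
    div_mul_cancel₀ _ two_ne_zero]

end

/-- `F` is strictly decreasing on `[0, ∞)`; consequently, for every `γ ≥ 0`,
`F(γ) > F(1) = π/[e^{−1/2} + √(π/2) Erf(1/√2)]²` if and only if `γ < 1`. -/
theorem stmt17 :
    StrictAntiOn momentProduct (Set.Ici (0 : ℝ)) ∧
      momentProduct 1 =
        Real.pi / (Real.exp (-(1 : ℝ) / 2) + Real.sqrt (Real.pi / 2) * erf (1 / Real.sqrt 2)) ^ 2 ∧
      ∀ γ ≥ (0 : ℝ), (momentProduct 1 < momentProduct γ ↔ γ < 1) :=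
  ⟨strictAntiOn_momentProduct, momentProduct_one,
    fun _ hγ => strictAntiOn_momentProduct.lt_iff_gt (Set.mem_Ici.2 zero_le_one) hγ⟩
end
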